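/- Let C be an unbounded polynomial class. With probability 1 − O(1/n), in a uniformly random word W ∈ C_n, all the dominant loop blocks in the prefix decomposition and in the suffix decomposition of W are large, i.e., have length at least 2KQ + 1. -/

import Mathlib

open Filter Asymptotics
open scoped Classical

/-- An embedding order on words over a weighted alphabet. -/
structure EmbeddingOrder (A : Type*) (w : A → ℕ) where
  le : List A → List A → Prop
  le_refl : ∀ W, le W W
  le_trans : ∀ {U V W}, le U V → le V W → le U W
  le_antisymm : ∀ {V W}, le V W → le W V → V = W
  nil_le : ∀ W, le [] W
  weight_lt : ∀ {W V}, le W V → W ≠ V → (W.map w).sum < (V.map w).sum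
  le_iff_factor : ∀ W V, le W V ↔ ∃ Ws : List (List A),
    Ws.length = V.length ∧ Ws.flatten = W ∧ ∀ q ∈ Ws.zip V, le q.1 [q.2]

namespace EmbeddingOrder

variable {A : Type*} {w : A → ℕ} (E : EmbeddingOrder A w) {f : ℕ} (φ : Fin f → List A)

/-- The weight of a word: the sum of the weights of its letters. -/
def wt (w : A → ℕ) (W : List A) : ℕ := (W.map w).sum

/-- The class `C = A* ∩ Av(φ¹,…,φ^f)` of all words avoiding every forbidden word. -/
def Cset : Set (List A) := {W | ∀ i, ¬ E.le (φ i) W}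

/-- The prefix state of `W`: its `i`-th component is the length of the longest prefix
of the forbidden word `φ i` contained in `W`. -/
noncomputable def pstate (W : List A) : Fin f → ℕ := fun i =>
  sSup {p | p ≤ (φ i).length ∧ E.le ((φ i).take p) W}

/-- The suffix state of `W`: its `i`-th component is the length of the longest suffix
of the forbidden word `φ i` contained in `W`. -/
noncomputable def sstate (W : List A) : Fin f → ℕ := fun i =>
  sSup {p | p ≤ (φ i).length ∧ E.le ((φ i).drop ((φ i).length - p)) W}

/-- A prefix state `p` and a suffix state `s` *overlap* if `p i + s i ≥ ℓ_i` for some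
`i` (equivalently, `XY ∉ C` whenever `X` has prefix state `p` and `Y` suffix state `s`);
otherwise they are *compatible*. -/
def POverlap (p s : Fin f → ℕ) : Prop := ∃ i, (φ i).length ≤ p i + s i

/-- The (prefix) loop alphabet of a state `p`: the letters whose appending does not
change the prefix state `p`. -/
def stateLoopP (p : Fin f → ℕ) : Set A :=
  {a | ∀ X : List A, E.pstate φ X = p → E.pstate φ (X ++ [a]) = p}

/-- The suffix loop alphabet of a state `s`: the letters whose prepending does not
change the suffix state `s`. -/
def stateLoopS (s : Fin f → ℕ) : Set A :=
  {a | ∀ Y : List A, E.sstate φ Y = s → E.sstate φ (a :: Y) = s}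

/-- `p'` is a *prefix successor* of `p`: `p' ≠ p` and some letter is a transition
symbol from `p` to `p'`. -/
def PSucc (p p' : Fin f → ℕ) : Prop :=
  p ≠ p' ∧ ∃ b : A, ∀ X : List A, E.pstate φ X = p → E.pstate φ (X ++ [b]) = p'

/-- `s'` is a *suffix successor* of `s`. -/
def SSucc (s s' : Fin f → ℕ) : Prop :=
  s ≠ s' ∧ ∃ b : A, ∀ Y : List A, E.sstate φ Y = s → E.sstate φ (b :: Y) = s'

/-- Compatible states `p` (prefix) and `s` (suffix) *match* if every prefix successor
of `p` overlaps with `s` and every suffix successor of `s` overlaps with `p`. -/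
def Matches (p s : Fin f → ℕ) : Prop :=
  ¬ POverlap φ p s ∧ (∀ p', E.PSucc φ p p' → POverlap φ p' s) ∧
    ∀ s', E.SSucc φ s s' → POverlap φ p s'

/-- `ρ(S)`: the unique positive root of `1 − Σ_{a∈S} x^{weight a}` for a nonempty set
`S` of letters (realised as a supremum). -/
noncomputable def rhoOf (w : A → ℕ) (S : Set A) : ℝ :=
  sSup {x : ℝ | 0 ≤ x ∧ ∑' a : S, x ^ w (a : A) ≤ 1}

/-- The growth rate of `S*`: the reciprocal `ρ(S)⁻¹` of the positive root of
`1 − Σ_{a∈S} x^{weight a}`. -/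
noncomputable def growthOf (w : A → ℕ) (S : Set A) : ℝ := (rhoOf w S)⁻¹

/-- The dominant growth rate `γ` of the class: the largest growth rate of the loop
alphabet of a (reachable) prefix state. -/
noncomputable def gammaC : ℝ :=
  sSup {g : ℝ | ∃ X ∈ E.Cset φ, g = growthOf w (E.stateLoopP φ (E.pstate φ X))}

/-- The number of dominant loop blocks (equivalently, dominant states) in the prefix
decomposition of `W`. -/
noncomputable def domCountP (W : List A) : ℕ :=
  Set.ncard {p : Fin f → ℕ | (∃ j ≤ W.length, E.pstate φ (W.take j) = p) ∧
    growthOf w (E.stateLoopP φ p) = E.gammaC φ}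

/-- The number of dominant loop blocks (equivalently, dominant states) in the suffix
decomposition of `W`. -/
noncomputable def domCountS (W : List A) : ℕ :=
  Set.ncard {s : Fin f → ℕ | (∃ j ≤ W.length, E.sstate φ (W.drop j) = s) ∧
    growthOf w (E.stateLoopS φ s) = E.gammaC φ}

/-- `D`: the largest number of dominant states appearing on a single prefix transition
path of a word of the class. -/
noncomputable def Dmax : ℕ := sSup {d : ℕ | ∃ W ∈ E.Cset φ, E.domCountP φ W = d}

end EmbeddingOrder

namespace EmbeddingOrder

variable {A : Type*} {w : A → ℕ} (E : EmbeddingOrder A w) {f : ℕ} (φ : Fin f → List A)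

/-- The length of the loop block of the prefix state `q` in `W`: the number of
positions of `W` that are loop symbols at state `q`. -/
noncomputable def blockLenP (W : List A) (q : Fin f → ℕ) : ℕ :=
  Set.ncard {i : ℕ | i < W.length ∧ E.pstate φ (W.take i) = q ∧
    E.pstate φ (W.take (i + 1)) = q}

/-- The length of the loop block of the suffix state `q` in `W`. -/
noncomputable def blockLenS (W : List A) (q : Fin f → ℕ) : ℕ :=
  Set.ncard {i : ℕ | i < W.length ∧ E.sstate φ (W.drop (i + 1)) = q ∧
    E.sstate φ (W.drop i) = q}

/-- Every dominant loop block of the prefix decomposition of `W` is *large*: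
it has length at least `2KQ + 1`. -/
def AllDomLargeP (K Q : ℕ) (W : List A) : Prop :=
  ∀ q : Fin f → ℕ, (∃ j ≤ W.length, E.pstate φ (W.take j) = q) →
    growthOf w (E.stateLoopP φ q) = E.gammaC φ → 2 * K * Q + 1 ≤ E.blockLenP φ W q

/-- Every dominant loop block of the suffix decomposition of `W` is *large*. -/
def AllDomLargeS (K Q : ℕ) (W : List A) : Prop :=
  ∀ q : Fin f → ℕ, (∃ j ≤ W.length, E.sstate φ (W.drop j) = q) →
    growthOf w (E.stateLoopS φ q) = E.gammaC φ → 2 * K * Q + 1 ≤ E.blockLenS φ W q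

/-- The number `|P|` of prefix states of words of `C`. -/
noncomputable def Pcard : ℕ :=
  Set.ncard {p : Fin f → ℕ | ∃ X ∈ E.Cset φ, E.pstate φ X = p}

/-- The number `|S|` of suffix states of words of `C`. -/
noncomputable def Scard : ℕ :=
  Set.ncard {s : Fin f → ℕ | ∃ Y ∈ E.Cset φ, E.sstate φ Y = s}

/-- The constant `Q = 3(|P| + |S|)`. -/
noncomputable def Qconst : ℕ := 3 * (E.Pcard φ + E.Scard φ)

/-- The largest weight `K` of a letter of the alphabet. -/
noncomputable def Kmax (A : Type*) [Fintype A] (w : A → ℕ) : ℕ := Finset.univ.sup w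

end EmbeddingOrder

open EmbeddingOrder

namespace BlockAux

section Machine

set_option linter.unusedSectionVars false

variable {A σ : Type*} [PartialOrder σ] (δ : σ → A → σ)

/-- Run the machine from state `q`. -/
def run (q : σ) : List A → σ
  | [] => q
  | a :: W => run (δ q a) W

/-- The transition skeleton of a word. -/
noncomputable def sk (q : σ) : List A → List A
  | [] => []
  | a :: W => if δ q a = q then sk q W else a :: sk (δ q a) W

/-- The block lengths of a word. -/
noncomputable def bl (q : σ) : List A → σ → ℕ
  | [], _ => 0
  | a :: W, p => bl (δ q a) W p + if q = p ∧ δ q a = p then 1 else 0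

/-- Visited states. -/
def vis (q : σ) : List A → σ → Prop
  | [], p => p = q
  | a :: W, p => p = q ∨ vis (δ q a) W p

/-- Words all of whose letters are transitions. -/
def IsSk (q : σ) : List A → Prop
  | [] => True
  | a :: W => δ q a ≠ q ∧ IsSk (δ q a) W

/-- Rebuild a word from block lengths and skeleton. -/
def build (one : A) (m : σ → ℕ) (q : σ) : List A → List A
  | [] => List.replicate (m q) one
  | a :: T => List.replicate (m q) one ++ a :: build one m (δ q a) T

theorem run_append (q : σ) (U V : List A) : run δ q (U ++ V) = run δ (run δ q U) V := by
  induction U generalizing q with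
  | nil => rfl
  | cons a U ih => exact ih _

theorem vis_self (q : σ) (W : List A) : vis δ q W q := by
  cases W <;> simp [vis]

theorem vis_le (hδ : ∀ q a, q ≤ δ q a) {q : σ} {W : List A} {p : σ} (h : vis δ q W p) :
    q ≤ p := by
  induction W generalizing q with
  | nil => exact le_of_eq h.symm
  | cons a W ih =>
    rcases h with h | h
    · exact le_of_eq h.symm
    · exact (hδ q a).trans (ih h)

theorem vis_iff (q : σ) (W : List A) (p : σ) :
    vis δ q W p ↔ ∃ j ≤ W.length, run δ q (W.take j) = p := by
  induction W generalizing q with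
  | nil => simp [vis, run, eq_comm]
  | cons a W ih =>
    constructor
    · rintro (h | h)
      · exact ⟨0, Nat.zero_le _, by simp [run, h]⟩
      · obtain ⟨j, hj, h⟩ := (ih _).1 h
        exact ⟨j + 1, by simpa using hj, by simpa [run] using h⟩
    · rintro ⟨j, hj, h⟩
      cases j with
      | zero => left; simpa [run] using h.symm
      | succ j => right; exact (ih _).2 ⟨j, by simpa using hj, by simpa [run] using h⟩

theorem bl_eq_sum (q : σ) (W : List A) (p : σ) :
    bl δ q W p = ∑ i ∈ Finset.range W.length,
      if run δ q (W.take i) = p ∧ run δ q (W.take (i + 1)) = p then 1 else 0 := by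
  induction W generalizing q with
  | nil => simp [bl]
  | cons a W ih =>
    rw [List.length_cons, Finset.sum_range_succ', bl, ih]
    simp [run]

theorem bl_eq_ncard (q : σ) (W : List A) (p : σ) :
    bl δ q W p = Set.ncard {i : ℕ | i < W.length ∧ run δ q (W.take i) = p ∧
      run δ q (W.take (i + 1)) = p} := by
  rw [bl_eq_sum, ← Finset.card_filter, ← Set.ncard_coe_finset]
  congr 1
  ext i
  simp

theorem vis_of_bl {q : σ} {W : List A} {p : σ} (h : bl δ q W p ≠ 0) : vis δ q W p := by
  induction W generalizing q with
  | nil => simp [bl] at h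
  | cons a W ih =>
    by_cases h1 : bl δ (δ q a) W p = 0
    · left
      by_contra h2
      apply h
      simp only [bl, h1]
      rw [if_neg]
      rintro ⟨h3, -⟩
      exact h2 h3.symm
    · right; exact ih h1

theorem isSk_sk (q : σ) (W : List A) : IsSk δ q (sk δ q W) := by
  induction W generalizing q with
  | nil => trivial
  | cons a W ih =>
    unfold sk
    split_ifs with h
    · exact ih _
    · exact ⟨h, ih _⟩

theorem run_sk (q : σ) (W : List A) : run δ q (sk δ q W) = run δ q W := by
  induction W generalizing q with
  | nil => rfl
  | cons a W ih =>
    unfold sk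
    split_ifs with h
    · rw [ih, run, h]
    · exact ih _

theorem vis_sk (q : σ) (W : List A) (p : σ) : vis δ q (sk δ q W) p ↔ vis δ q W p := by
  induction W generalizing q with
  | nil => rfl
  | cons a W ih =>
    unfold sk
    split_ifs with h
    · rw [ih, vis, h]
      constructor
      · exact Or.inr
      · rintro (rfl | h')
        · exact vis_self _ _ _
        · exact h'
    · exact or_congr Iff.rfl (ih _)

theorem good_of_run {good : σ → Prop} (hgood : ∀ q a, good (δ q a) → good q) {q : σ}
    {W : List A} (h : good (run δ q W)) : good q := by
  induction W generalizing q with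
  | nil => exact h
  | cons a W ih => exact hgood q a (ih h)

theorem dom_of_bl {one : A} {good : σ → Prop} (hgood : ∀ q a, good (δ q a) → good q)
    (hloop : ∀ q a, good q → δ q a = q → a = one) {q : σ} {W : List A}
    (hg : good (run δ q W)) {p : σ} (h : bl δ q W p ≠ 0) : δ p one = p := by
  induction W generalizing q with
  | nil => simp [bl] at h
  | cons a W ih =>
    by_cases h1 : bl δ (δ q a) W p = 0
    · simp only [bl, h1] at h
      have h2 : q = p ∧ δ q a = p := by
        by_contra h2
        simp [h2] at h
      obtain ⟨rfl, h3⟩ := h2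
      have := hloop q a (good_of_run δ hgood hg) h3
      rwa [this] at h3
    · exact ih hg h1

theorem wt_eq [Fintype σ] {one : A} {w : A → ℕ} (hone : w one = 1) {good : σ → Prop}
    (hgood : ∀ q a, good (δ q a) → good q)
    (hloop : ∀ q a, good q → δ q a = q → a = one) {q : σ} {W : List A}
    (hg : good (run δ q W)) :
    (∑ p, bl δ q W p) + (( sk δ q W).map w).sum = (W.map w).sum := by
  induction W generalizing q with
  | nil => simp [bl, sk]
  | cons a W ih =>
    have := ih hg
    unfold sk
    simp only [bl, Finset.sum_add_distrib]
    split_ifs with h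
    · have ha := hloop q a (good_of_run δ hgood hg) h
      simp only [h] at this ⊢
      simp only [and_self, Finset.sum_ite_eq, Finset.mem_univ, if_true]
      simp [ha, hone]
      omega
    · have : ∀ p, ¬ (q = p ∧ δ q a = p) := by
        rintro p ⟨rfl, h'⟩; exact h h'
      simp [this]
      omega

theorem build_congr (hδ : ∀ q a, q ≤ δ q a) (one : A) {m m' : σ → ℕ} {q : σ} {T : List A}
    (h : ∀ p, q ≤ p → m p = m' p) : build δ one m q T = build δ one m' q T := by
  induction T generalizing q with
  | nil => simp [build, h q le_rfl]
  | cons a T ih =>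
    simp only [build, h q le_rfl]
    rw [ih (fun p hp => h p ((hδ q a).trans hp))]

theorem not_ge_of_ne (hδ : ∀ q a, q ≤ δ q a) {q : σ} {a : A} (h : δ q a ≠ q) :
    ¬ δ q a ≤ q := fun h' => h (le_antisymm h' (hδ q a))

theorem build_succ (hδ : ∀ q a, q ≤ δ q a) (one : A) {m m' : σ → ℕ} {q : σ} {T : List A}
    (hT : IsSk δ q T) (h : ∀ p, p ≠ q → m' p = m p) (hq : m' q = m q + 1) :
    build δ one m' q T = one :: build δ one m q T := by
  cases T with
  | nil => simp [build, hq, List.replicate_succ]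
  | cons a T =>
    simp only [build, hq, List.replicate_succ]
    rw [build_congr δ hδ one (m := m') (m' := m)]
    · rfl
    · intro p hp
      apply h
      rintro rfl
      exact not_ge_of_ne δ hδ hT.1 hp

theorem build_bl (hδ : ∀ q a, q ≤ δ q a) {one : A} {good : σ → Prop}
    (hgood : ∀ q a, good (δ q a) → good q)
    (hloop : ∀ q a, good q → δ q a = q → a = one) {q : σ} {W : List A}
    (hg : good (run δ q W)) : build δ one (bl δ q W) q (sk δ q W) = W := by
  induction W generalizing q with
  | nil => simp [build, bl, sk]
  | cons a W ih =>
    have := ih hg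
    unfold sk
    split_ifs with h
    · have ha := hloop q a (good_of_run δ hgood hg) h
      rw [h] at this
      rw [build_succ δ hδ one (m := bl δ q W) (isSk_sk δ q W), this, ha]
      · intro p hp
        simp only [bl, h]
        simp [Ne.symm hp]
      · simp [bl, h]
    · have h0 : bl δ (δ q a) W q = 0 := by
        by_contra h0
        exact not_ge_of_ne δ hδ h (vis_le δ hδ (vis_of_bl δ h0))
      have h1 : bl δ q (a :: W) = bl δ (δ q a) W := by
        funext p
        have : ¬ (q = p ∧ δ q a = p) := by
          rintro ⟨rfl, h'⟩; exact h h'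
        simp [bl, this]
      rw [h1, build, h0, this]
      rfl

theorem rep_facts {one : A} {q : σ} {k : ℕ} (h : k ≠ 0 → δ q one = q) (V : List A) :
    run δ q (List.replicate k one ++ V) = run δ q V ∧
    sk δ q (List.replicate k one ++ V) = sk δ q V ∧
    ∀ p, bl δ q (List.replicate k one ++ V) p = bl δ q V p + if q = p then k else 0 := by
  induction k with
  | zero => simp
  | succ k ih =>
    have h1 := h (Nat.succ_ne_zero _)
    obtain ⟨a, b, c⟩ := ih (fun _ => h1)
    simp only [List.replicate_succ, List.cons_append, run, sk, bl, h1, if_true, a, b, c,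
      true_and, and_self]
    intro p
    split_ifs <;> omega

theorem build_facts (hδ : ∀ q a, q ≤ δ q a) {one : A} {m : σ → ℕ} {q : σ} {T : List A}
    (hT : IsSk δ q T) (hm : ∀ p, vis δ q T p → m p ≠ 0 → δ p one = p) :
    run δ q (build δ one m q T) = run δ q T ∧
    sk δ q (build δ one m q T) = T ∧
    ∀ p, bl δ q (build δ one m q T) p = if vis δ q T p then m p else 0 := by
  induction T generalizing q with
  | nil =>
    obtain ⟨a, b, c⟩ := rep_facts δ (hm q rfl) []
    rw [List.append_nil] at a b c
    refine ⟨a, b, fun p => ?_⟩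
    unfold build
    rw [c]
    by_cases h : q = p
    · subst h; simp [bl, vis]
    · simp [bl, vis, h, Ne.symm h]
  | cons t T ih =>
    obtain ⟨a, b, c⟩ := rep_facts δ (hm q (vis_self _ _ _)) (t :: build δ one m (δ q t) T)
    obtain ⟨a', b', c'⟩ := ih hT.2 (fun p hp => hm p (Or.inr hp))
    refine ⟨?_, ?_, fun p => ?_⟩
    · unfold build; rw [a]; exact a'
    · unfold build; rw [b, sk, if_neg hT.1, b']
    · unfold build; rw [c, bl, c']
      have h1 : ¬ vis δ (δ q t) T q := fun h => not_ge_of_ne δ hδ hT.1 (vis_le δ hδ h)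
      by_cases h : q = p
      · subst h; simp [vis, h1, hT.1]
      · simp [vis, h, Ne.symm h]

theorem sk_length [Fintype σ] (hδ : ∀ q a, q ≤ δ q a) (q : σ) (W : List A) :
    (sk δ q W).length + 1 ≤ (Finset.univ.filter (fun p => q ≤ p)).card := by
  induction W generalizing q with
  | nil =>
    simp only [sk, List.length_nil, zero_add]
    exact Finset.card_pos.2 ⟨q, by simp⟩
  | cons a W ih =>
    unfold sk
    split_ifs with h
    · exact ih q
    · have h1 := ih (δ q a)
      have h2 : (Finset.univ.filter (fun p => δ q a ≤ p)).card <
          (Finset.univ.filter (fun p => q ≤ p)).card := by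
        apply Finset.card_lt_card
        rw [Finset.ssubset_iff_of_subset]
        · exact ⟨q, by simp, by simpa using not_ge_of_ne δ hδ h⟩
        · intro p hp
          simp only [Finset.mem_filter, Finset.mem_univ, true_and] at hp ⊢
          exact (hδ q a).trans hp
      simp only [List.length_cons]
      omega

theorem sk_length_le [Fintype σ] (hδ : ∀ q a, q ≤ δ q a) (q : σ) (W : List A) :
    (sk δ q W).length ≤ Fintype.card σ := by
  have h1 := sk_length δ hδ q W
  have h2 := Finset.card_le_univ (Finset.univ.filter (fun p : σ => q ≤ p))
  omega

theorem count_le {one : A} {good : σ → Prop}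
    (hgood : ∀ q a, good (δ q a) → good q)
    (hloop : ∀ q a, good q → δ q a = q → a = one) {q : σ} {W : List A}
    (hg : good (run δ q W)) {a : A} (ha : a ≠ one) :
    W.count a ≤ (sk δ q W).length := by
  induction W generalizing q with
  | nil => simp
  | cons b W ih =>
    have := ih hg
    unfold sk
    split_ifs with h
    · have hb := hloop q b (good_of_run δ hgood hg) h
      rw [h] at this
      rwa [List.count_cons_of_ne]
      rw [hb]; exact Ne.symm ha
    · rw [List.count_cons, List.length_cons]
      split_ifs <;> omega

theorem finite_wt [Finite A] {w : A → ℕ} (hw : ∀ a, 0 < w a) (n : ℕ) :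
    {W : List A | (W.map w).sum = n}.Finite := by
  apply (List.finite_length_le A n).subset
  intro W hW
  have : ∀ V : List A, V.length ≤ (V.map w).sum := by
    intro V
    induction V with
    | nil => simp
    | cons a V ih => have := hw a; simp; omega
  exact (this W).trans (le_of_eq hW)

theorem sum_le_len {w : A → ℕ} {K : ℕ} (hK : ∀ a, w a ≤ K) (V : List A) :
    (V.map w).sum ≤ K * V.length := by
  induction V with
  | nil => simp
  | cons a V ih => have := hK a; simp [mul_add]; omega

theorem machine_bound [Finite A] [Fintype σ] (hδ : ∀ q a, q ≤ δ q a) {one : A} {w : A → ℕ}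
    (hw : ∀ a, 0 < w a) (hone : w one = 1) {K : ℕ} (hK : ∀ a, w a ≤ K)
    {good : σ → Prop} (hgood : ∀ q a, good (δ q a) → good q)
    (hloop : ∀ q a, good q → δ q a = q → a = one) (q0 : σ) (M : ℕ) :
    ∃ c : ℕ, ∀ n : ℕ,
      Set.ncard {W : List A | good (run δ q0 W) ∧ (W.map w).sum = n ∧
        ∃ p, vis δ q0 W p ∧ δ p one = p ∧ bl δ q0 W p ≤ M} * n ≤
      c * Set.ncard {W : List A | good (run δ q0 W) ∧ (W.map w).sum = n} := by
  set s := Fintype.card σ with hs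
  have hspos : 0 < s := Fintype.card_pos_iff.2 ⟨q0⟩
  refine ⟨(s * (M + 1) + K * s) + (2 * s + K * s) * (s * s * (M + 1)), fun n => ?_⟩
  set B := {W : List A | good (run δ q0 W) ∧ (W.map w).sum = n ∧
        ∃ p, vis δ q0 W p ∧ δ p one = p ∧ bl δ q0 W p ≤ M} with hB
  set C := {W : List A | good (run δ q0 W) ∧ (W.map w).sum = n} with hC
  have hCf : C.Finite := (finite_wt hw n).subset (fun W h => h.2)
  have hBC : B ⊆ C := fun W h => ⟨h.1, h.2.1⟩
  have hBf : B.Finite := hCf.subset hBC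
  have hle : B.ncard ≤ C.ncard := Set.ncard_le_ncard hBC hCf
  set L := (n - K * s) / s with hL
  have hL1 : n < s * (L + 1) + K * s := by
    have := Nat.lt_mul_div_succ (n - K * s) hspos
    have h2 : (n - K * s) / s = L := rfl
    rw [h2] at this
    omega
  rcases Nat.lt_or_ge M L with hML | hML
  swap
  · calc B.ncard * n ≤ C.ncard * (s * (M + 1) + K * s) := by
          apply Nat.mul_le_mul hle
          have : s * (L + 1) ≤ s * (M + 1) := Nat.mul_le_mul_left _ (by omega)
          omega
      _ ≤ _ := by rw [mul_comm]; apply Nat.mul_le_mul_right; omega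
  -- main case
  have hbig : ∀ W ∈ B, ∃ p p', vis δ q0 W p ∧ δ p one = p ∧ bl δ q0 W p ≤ M ∧
      L ≤ bl δ q0 W p' ∧ p ≠ p' := by
    rintro W ⟨hg, hn, p, h1, h2, h3⟩
    have hsum := wt_eq δ hone hgood hloop hg
    have hskw : ((sk δ q0 W).map w).sum ≤ K * s :=
      (sum_le_len hK _).trans (Nat.mul_le_mul_left _ (sk_length_le δ hδ q0 W))
    have : ∃ p', L ≤ bl δ q0 W p' := by
      by_contra hcon
      push Not at hcon
      have h4 : ∑ p, bl δ q0 W p < ∑ _p : σ, L :=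
        Finset.sum_lt_sum_of_nonempty ⟨q0, Finset.mem_univ _⟩ (fun p _ => hcon p)
      rw [Finset.sum_const, Finset.card_univ, smul_eq_mul] at h4
      have h5 : s * L ≤ n - K * s := Nat.mul_div_le _ _
      rw [← hs] at h4
      omega
    obtain ⟨p', hp'⟩ := this
    refine ⟨p, p', h1, h2, h3, hp', ?_⟩
    rintro rfl
    omega
  have : Nonempty σ := ⟨q0⟩
  choose! f g hf1 hf2 hf3 hg1 hfg using hbig
  -- the modified block lengths
  let mm : List A × ℕ → σ → ℕ := fun x => Function.update
    (Function.update (bl δ q0 x.1) (f x.1) x.2) (g x.1)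
    (bl δ q0 x.1 (f x.1) + bl δ q0 x.1 (g x.1) - x.2)
  let Φ : List A × ℕ → (List A × (σ × σ × ℕ)) := fun x =>
    (build δ one (mm x) q0 (sk δ q0 x.1), (f x.1, g x.1, bl δ q0 x.1 (f x.1)))
  let dom : Finset (List A × ℕ) := hBf.toFinset ×ˢ Finset.range L
  let tgt : Finset (List A × (σ × σ × ℕ)) :=
    hCf.toFinset ×ˢ (Finset.univ ×ˢ (Finset.univ ×ˢ Finset.range (M + 1)))
  have hvisg : ∀ W ∈ B, vis δ q0 W (g W) := fun W hW =>
    vis_of_bl δ (by have := hg1 W hW; omega)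
  have hdomg : ∀ W ∈ B, δ (g W) one = g W := fun W hW =>
    dom_of_bl δ hgood hloop hW.1 (W := W) (by have := hg1 W hW; omega)
  have key : ∀ x ∈ dom, good (run δ q0 (Φ x).1) ∧ sk δ q0 (Φ x).1 = sk δ q0 x.1 ∧
      bl δ q0 (Φ x).1 = mm x := by
    rintro ⟨W, t⟩ hx
    obtain ⟨hW, ht⟩ := Finset.mem_product.1 hx
    replace hW : W ∈ B := (Set.Finite.mem_toFinset hBf).1 hW
    have hmd : ∀ p, mm (W, t) p ≠ 0 → vis δ q0 W p ∧ δ p one = p := by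
      intro p hp
      by_cases h1 : p = g W
      · subst h1; exact ⟨hvisg W hW, hdomg W hW⟩
      by_cases h2 : p = f W
      · subst h2; exact ⟨hf1 W hW, hf2 W hW⟩
      have h3 : bl δ q0 W p ≠ 0 := by simpa [mm, h1, h2] using hp
      exact ⟨vis_of_bl δ h3, dom_of_bl δ hgood hloop hW.1 h3⟩
    obtain ⟨a, b, c⟩ := build_facts δ hδ (one := one) (m := mm (W, t)) (isSk_sk δ q0 W)
      (fun p _ hp => (hmd p hp).2)
    refine ⟨?_, b, ?_⟩
    · simp only [Φ]
      rw [a, run_sk]; exact hW.1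
    · funext p
      simp only [Φ]
      rw [c, vis_sk]
      split_ifs with h
      · rfl
      · by_contra h'
        exact h (hmd p (Ne.symm h')).1
  have hmaps : ∀ x ∈ dom, Φ x ∈ tgt := by
    rintro ⟨W, t⟩ hx
    obtain ⟨a, b, c⟩ := key _ hx
    obtain ⟨hW, ht⟩ := Finset.mem_product.1 hx
    replace hW : W ∈ B := (Set.Finite.mem_toFinset hBf).1 hW
    have ht : t < L := Finset.mem_range.1 ht
    have hsum := wt_eq δ hone hgood hloop a
    have hsum' := wt_eq δ hone hgood hloop hW.1
    rw [b, c] at hsum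
    have hms : ∑ p, mm (W, t) p = ∑ p, bl δ q0 W p := by
      have hne : f W ≠ g W := hfg W hW
      have hfm : f W ∈ Finset.univ.erase (g W) := by simp [hne]
      have e1 := Finset.add_sum_erase _ (bl δ q0 W) (Finset.mem_univ (g W))
      have e2 := Finset.add_sum_erase _ (bl δ q0 W) hfm
      simp only [mm]
      rw [Finset.sum_update_of_mem (Finset.mem_univ _), Finset.sdiff_singleton_eq_erase,
        Finset.sum_update_of_mem hfm, Finset.sdiff_singleton_eq_erase]
      have := hg1 W hW
      omega
    simp only [tgt, Finset.mem_product, Set.Finite.mem_toFinset, Finset.mem_univ, true_and,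
      Finset.mem_range]
    refine ⟨⟨a, ?_⟩, ?_⟩
    · rw [← hsum, hms]; exact hsum'.trans hW.2.1
    · have := hf3 W hW
      simp only [Φ]; omega
  have hinj : Set.InjOn Φ dom := by
    rintro ⟨W, t⟩ hx ⟨W', t'⟩ hx' heq
    rw [Finset.mem_coe] at hx hx'
    obtain ⟨a, b, c⟩ := key _ hx
    obtain ⟨a', b', c'⟩ := key _ hx'
    obtain ⟨hW, ht⟩ := Finset.mem_product.1 hx
    obtain ⟨hW', ht'⟩ := Finset.mem_product.1 hx'
    replace hW : W ∈ B := (Set.Finite.mem_toFinset hBf).1 hW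
    replace hW' : W' ∈ B := (Set.Finite.mem_toFinset hBf).1 hW'
    have ht : t < L := Finset.mem_range.1 ht
    have ht' : t' < L := Finset.mem_range.1 ht'
    rw [heq] at b c
    have hsk : sk δ q0 W = sk δ q0 W' := b.symm.trans b'
    have hmm : mm (W, t) = mm (W', t') := c.symm.trans c'
    have hf : f W = f W' := congrArg (fun z => z.2.1) heq
    have hg : g W = g W' := congrArg (fun z => z.2.2.1) heq
    have hj : bl δ q0 W (f W) = bl δ q0 W' (f W') := congrArg (fun z => z.2.2.2) heq
    have hne : f W ≠ g W := hfg W hW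
    have hne' : f W' ≠ g W' := hfg W' hW'
    have htt : t = t' := by
      have := congrFun hmm (f W)
      simp only [mm] at this
      rw [Function.update_of_ne hne, Function.update_self, hf, Function.update_of_ne hne',
        Function.update_self] at this
      exact this
    have hgg : bl δ q0 W (g W) = bl δ q0 W' (g W') := by
      have := congrFun hmm (g W)
      simp only [mm] at this
      rw [Function.update_self, hg, Function.update_self, ← hg] at this
      have h1 := hg1 W hW
      have h2 := hg1 W' hW'
      rw [← hg] at h2 ⊢
      omega
    have hbl : bl δ q0 W = bl δ q0 W' := by
      funext p
      by_cases h1 : p = g W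
      · rw [h1, hgg, hg]
      by_cases h2 : p = f W
      · rw [h2, hj, hf]
      have := congrFun hmm p
      simp only [mm] at this
      rw [Function.update_of_ne h1, Function.update_of_ne h2, Function.update_of_ne (hg ▸ h1),
        Function.update_of_ne (hf ▸ h2)] at this
      exact this
    have hWW : W = W' := by
      rw [← build_bl δ hδ hgood hloop hW.1, ← build_bl δ hδ hgood hloop hW'.1, hbl, hsk]
    rw [hWW, htt]
  have hcard := Finset.card_le_card_of_injOn Φ hmaps hinj
  simp only [dom, tgt, Finset.card_product, Finset.card_range, Finset.card_univ] at hcard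
  rw [← Set.ncard_eq_toFinset_card B hBf, ← Set.ncard_eq_toFinset_card C hCf, ← hs] at hcard
  have hn : n ≤ L * (2 * s + K * s) := by
    have h1 : 1 ≤ L := by omega
    nlinarith [Nat.zero_le (K * s), Nat.zero_le s, Nat.mul_le_mul_right (K * s) h1,
      Nat.mul_le_mul_right s h1]
  calc B.ncard * n ≤ B.ncard * (L * (2 * s + K * s)) := Nat.mul_le_mul_left _ hn
    _ = (B.ncard * L) * (2 * s + K * s) := by ring
    _ ≤ (C.ncard * (s * (s * (M + 1)))) * (2 * s + K * s) := Nat.mul_le_mul_right _ hcard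
    _ = ((2 * s + K * s) * (s * s * (M + 1))) * C.ncard := by ring
    _ ≤ _ := by apply Nat.mul_le_mul_right; omega

end Machine

end BlockAux

namespace EmbeddingOrder

section Concrete

variable {A : Type*} {w : A → ℕ} (E : EmbeddingOrder A w) {f : ℕ} (φ : Fin f → List A)

theorem le_iff_forall₂ (W V : List A) : E.le W V ↔ ∃ Ws : List (List A),
    List.Forall₂ (fun U a => E.le U [a]) Ws V ∧ Ws.flatten = W := by
  rw [E.le_iff_factor]
  constructor
  · rintro ⟨Ws, h1, h2, h3⟩
    exact ⟨Ws, List.forall₂_iff_zip.2 ⟨h1, fun {a b} h => h3 (a, b) h⟩, h2⟩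
  · rintro ⟨Ws, h1, h2⟩
    obtain ⟨h3, h4⟩ := List.forall₂_iff_zip.1 h1
    exact ⟨Ws, h3, h2, fun q hq => h4 hq⟩

theorem le_append {U V X Y : List A} (h1 : E.le U X) (h2 : E.le V Y) :
    E.le (U ++ V) (X ++ Y) := by
  rw [le_iff_forall₂] at *
  obtain ⟨Ws, h1, rfl⟩ := h1
  obtain ⟨Vs, h2, rfl⟩ := h2
  exact ⟨Ws ++ Vs, List.rel_append h1 h2, by simp⟩

theorem le_split {Z X Y : List A} (h : E.le Z (X ++ Y)) :
    ∃ U V, Z = U ++ V ∧ E.le U X ∧ E.le V Y := by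
  obtain ⟨Ws, h1, rfl⟩ := (E.le_iff_forall₂ _ _).1 h
  refine ⟨(Ws.take X.length).flatten, (Ws.drop X.length).flatten, ?_, ?_, ?_⟩
  · rw [← List.flatten_append, List.take_append_drop]
  · exact (E.le_iff_forall₂ _ _).2 ⟨_, List.forall₂_take_append _ _ _ h1, rfl⟩
  · exact (E.le_iff_forall₂ _ _).2 ⟨_, List.forall₂_drop_append _ _ _ h1, rfl⟩

theorem le_append_right (U V : List A) : E.le U (U ++ V) := by
  simpa using E.le_append (E.le_refl U) (E.nil_le V)

theorem take_le_iff (i : Fin f) (W : List A) {p : ℕ} (hp : p ≤ (φ i).length) :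
    E.le ((φ i).take p) W ↔ p ≤ E.pstate φ W i := by
  have hb : BddAbove {p | p ≤ (φ i).length ∧ E.le ((φ i).take p) W} :=
    ⟨(φ i).length, fun x hx => hx.1⟩
  constructor
  · intro h
    exact le_csSup hb ⟨hp, h⟩
  · intro h
    have hm : E.pstate φ W i ∈ {p | p ≤ (φ i).length ∧ E.le ((φ i).take p) W} :=
      Nat.sSup_mem ⟨0, Nat.zero_le _, by simpa using E.nil_le W⟩ hb
    refine E.le_trans ?_ hm.2
    have : (φ i).take p = ((φ i).take (E.pstate φ W i)).take p := by
      rw [List.take_take, min_eq_left h]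
    rw [this]
    conv_rhs => rw [← List.take_append_drop p ((φ i).take (E.pstate φ W i))]
    exact E.le_append_right _ _

theorem pstate_le_length (W : List A) (i : Fin f) : E.pstate φ W i ≤ (φ i).length := by
  have hb : BddAbove {p | p ≤ (φ i).length ∧ E.le ((φ i).take p) W} :=
    ⟨(φ i).length, fun x hx => hx.1⟩
  exact (Nat.sSup_mem (s := {p | p ≤ (φ i).length ∧ E.le ((φ i).take p) W})
    ⟨0, Nat.zero_le _, by simpa using E.nil_le W⟩ hb).1

theorem pstate_mono {X Y : List A} (h : E.le X Y) : E.pstate φ X ≤ E.pstate φ Y := by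
  intro i
  have h1 := E.pstate_le_length φ X i
  exact (E.take_le_iff φ i Y h1).1 (E.le_trans ((E.take_le_iff φ i X h1).2 le_rfl) h)

theorem mem_Cset_iff (W : List A) :
    W ∈ E.Cset φ ↔ ∀ i, E.pstate φ W i < (φ i).length := by
  refine forall_congr' fun i => ?_
  rw [← not_le, ← E.take_le_iff φ i W le_rfl, List.take_length]

theorem Cset_down {X Y : List A} (h : E.le X Y) (hY : Y ∈ E.Cset φ) : X ∈ E.Cset φ :=
  fun i hi => hY i (E.le_trans hi h)

theorem le_snoc_iff (i : Fin f) (X : List A) (a : A) {p : ℕ} (hp : p ≤ (φ i).length) :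
    E.le ((φ i).take p) (X ++ [a]) ↔
      ∃ u ≤ p, u ≤ E.pstate φ X i ∧ E.le (((φ i).take p).drop u) [a] := by
  constructor
  · intro h
    obtain ⟨U, V, h1, h2, h3⟩ := E.le_split h
    have hl : U.length ≤ p := by
      have := congrArg List.length h1
      simp at this
      omega
    have hU : U = (φ i).take U.length := by
      have : ((φ i).take p).take U.length = U := by rw [h1]; simp
      rw [List.take_take, min_eq_left hl] at this
      exact this.symm
    refine ⟨U.length, hl, ?_, ?_⟩
    · rw [← E.take_le_iff φ i X (hl.trans hp), ← hU]; exact h2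
    · rw [h1]; simpa using h3
  · rintro ⟨u, hu, h1, h2⟩
    rw [← E.take_le_iff φ i X (hu.trans hp)] at h1
    have := E.le_append h1 h2
    have h3 : (φ i).take u = ((φ i).take p).take u := by rw [List.take_take, min_eq_left hu]
    rwa [h3, List.take_append_drop] at this

theorem pstate_congr {X Y : List A} (h : E.pstate φ X = E.pstate φ Y) (a : A) :
    E.pstate φ (X ++ [a]) = E.pstate φ (Y ++ [a]) := by
  funext i
  unfold pstate
  congr 1
  ext p
  refine and_congr_right fun hp => ?_
  rw [E.le_snoc_iff φ i X a hp, E.le_snoc_iff φ i Y a hp, h]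

theorem mem_stateLoopP (X : List A) (a : A) :
    a ∈ E.stateLoopP φ (E.pstate φ X) ↔ E.pstate φ (X ++ [a]) = E.pstate φ X := by
  constructor
  · intro h; exact h X rfl
  · intro h Y hY
    rw [E.pstate_congr φ hY a, h]

/-- The transition function on the reachable prefix states. -/
noncomputable def pδ (q : Set.range (E.pstate φ)) (a : A) : Set.range (E.pstate φ) :=
  ⟨E.pstate φ (q.2.choose ++ [a]), _, rfl⟩

theorem pδ_eq (X : List A) (a : A) (q : Set.range (E.pstate φ)) (hq : q.1 = E.pstate φ X) :
    (E.pδ φ q a).1 = E.pstate φ (X ++ [a]) :=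
  E.pstate_congr φ (q.2.choose_spec.trans hq) a

theorem run_eq (W : List A) :
    (BlockAux.run (E.pδ φ) ⟨E.pstate φ [], _, rfl⟩ W).1 = E.pstate φ W := by
  induction W using List.reverseRecOn with
  | nil => rfl
  | append_singleton W a ih =>
    rw [BlockAux.run_append]
    exact E.pδ_eq φ W a _ ih

theorem finite_range : (Set.range (E.pstate φ)).Finite := by
  apply (Set.finite_Icc (0 : Fin f → ℕ) (fun i => (φ i).length)).subset
  rintro _ ⟨X, rfl⟩
  exact ⟨fun i => Nat.zero_le _, fun i => E.pstate_le_length φ X i⟩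

theorem pδ_le (q : Set.range (E.pstate φ)) (a : A) : q ≤ E.pδ φ q a := by
  obtain ⟨_, X, rfl⟩ := q
  change E.pstate φ X ≤ _
  rw [E.pδ_eq φ X a _ rfl]
  exact E.pstate_mono φ (E.le_append_right _ _)

theorem good_pδ (q : Set.range (E.pstate φ)) (a : A)
    (h : ∀ i, (E.pδ φ q a).1 i < (φ i).length) : ∀ i, q.1 i < (φ i).length :=
  fun i => lt_of_le_of_lt (E.pδ_le φ q a i) (h i)

theorem loop_pδ {one : A}
    (hloop : ∀ X ∈ E.Cset φ, ∀ a, E.pstate φ (X ++ [a]) = E.pstate φ X → a = one)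
    (q : Set.range (E.pstate φ)) (a : A) (hg : ∀ i, q.1 i < (φ i).length)
    (h : E.pδ φ q a = q) : a = one := by
  obtain ⟨_, X, rfl⟩ := q
  have h1 := congrArg Subtype.val h
  rw [E.pδ_eq φ X a _ rfl] at h1
  exact hloop X ((E.mem_Cset_iff φ X).2 hg) a h1

theorem pcount {one : A}
    (hloop : ∀ X ∈ E.Cset φ, ∀ a, E.pstate φ (X ++ [a]) = E.pstate φ X → a = one) :
    ∃ N : ℕ, ∀ W ∈ E.Cset φ, ∀ a, a ≠ one → W.count a ≤ N := by
  have := (E.finite_range φ).fintype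
  refine ⟨Fintype.card (Set.range (E.pstate φ)), fun W hW a ha => ?_⟩
  refine _root_.le_trans (BlockAux.count_le (E.pδ φ) (good := fun q => ∀ i, q.1 i < (φ i).length)
    (E.good_pδ φ) (E.loop_pδ φ hloop) (q := ⟨E.pstate φ [], _, rfl⟩) ?_ ha)
    (BlockAux.sk_length_le _ (E.pδ_le φ) _ _)
  rw [E.run_eq]
  exact (E.mem_Cset_iff φ W).1 hW

theorem pbound [Fintype A] (hw : ∀ a, 0 < w a) {one : A} (hone : w one = 1)
    (hone_le : ∀ a : A, E.le [one] [a])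
    (hloop : ∀ X ∈ E.Cset φ, ∀ a, E.pstate φ (X ++ [a]) = E.pstate φ X → a = one) (M : ℕ) :
    ∃ c : ℕ, ∀ n : ℕ,
      Set.ncard {W : List A | W ∈ E.Cset φ ∧ wt w W = n ∧
        ∃ q, (∃ j ≤ W.length, E.pstate φ (W.take j) = q) ∧ (E.stateLoopP φ q).Nonempty ∧
          E.blockLenP φ W q ≤ M} * n ≤
      c * Set.ncard {W : List A | W ∈ E.Cset φ ∧ wt w W = n} := by
  have := (E.finite_range φ).fintype
  obtain ⟨c, hc⟩ := BlockAux.machine_bound (E.pδ φ) (E.pδ_le φ) hw hone (K := Kmax A w)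
    (fun a => Finset.le_sup (f := w) (Finset.mem_univ a))
    (good := fun q => ∀ i, q.1 i < (φ i).length)
    (E.good_pδ φ) (E.loop_pδ φ hloop) ⟨E.pstate φ [], _, rfl⟩ M
  refine ⟨c, fun n => ?_⟩
  have hC : {W : List A | W ∈ E.Cset φ ∧ wt w W = n} = {W : List A |
      (∀ i, (BlockAux.run (E.pδ φ) ⟨E.pstate φ [], _, rfl⟩ W).1 i < (φ i).length) ∧
        (W.map w).sum = n} := by
    ext W
    simp only [Set.mem_ofPred_eq]
    rw [E.run_eq, E.mem_Cset_iff]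
    rfl
  rw [hC]
  refine _root_.le_trans (Nat.mul_le_mul_right n (Set.ncard_le_ncard ?_
    ((BlockAux.finite_wt hw n).subset (fun W h => h.2.1)))) (hc n)
  rintro W ⟨hW, hn, q, ⟨j, hj, rfl⟩, ⟨b, hb⟩, hle⟩
  refine ⟨?_, hn, ⟨E.pstate φ (W.take j), _, rfl⟩, ?_, ?_, ?_⟩
  · rw [E.run_eq]; exact (E.mem_Cset_iff φ W).1 hW
  · rw [BlockAux.vis_iff]
    exact ⟨j, hj, Subtype.ext (E.run_eq φ _)⟩
  · apply Subtype.ext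
    rw [E.pδ_eq φ (W.take j) one _ rfl]
    apply _root_.le_antisymm
    · rw [E.mem_stateLoopP] at hb
      exact (E.pstate_mono φ (E.le_append (E.le_refl _) (hone_le b))).trans (_root_.le_of_eq hb)
    · exact E.pstate_mono φ (E.le_append_right _ _)
  · rw [BlockAux.bl_eq_ncard]
    refine _root_.le_trans (le_of_eq ?_) hle
    unfold blockLenP
    congr 1
    ext i
    simp only [Set.mem_ofPred_eq, Subtype.ext_iff, E.run_eq]

theorem growthOf_empty : growthOf w (∅ : Set A) = 0 := by
  unfold growthOf rhoOf
  rw [inv_eq_zero]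
  apply Real.sSup_of_not_bddAbove
  rintro ⟨b, hb⟩
  have := hb (a := |b| + 1) ⟨by positivity, by simp⟩
  have := le_abs_self b
  linarith

theorem growthOf_gt [Fintype A] (hw : ∀ a, 0 < w a) {one a : A} (hone : w one = 1)
    (ha : a ≠ one) {S : Set A} (h1 : one ∈ S) (h2 : a ∈ S) : 1 < growthOf w S := by
  have hsub : ∀ x : ℝ, 0 ≤ x → ∑' b : S, x ^ w (b : A) ≤ 1 → x + x ^ w a ≤ 1 := by
    intro x hx h
    rw [tsum_fintype] at h
    refine _root_.le_trans ?_ h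
    have hne : (⟨one, h1⟩ : S) ≠ ⟨a, h2⟩ := fun h => ha (congrArg Subtype.val h).symm
    have := Finset.sum_le_sum_of_subset_of_nonneg
      (Finset.subset_univ ({⟨one, h1⟩, ⟨a, h2⟩} : Finset S))
      (f := fun b : S => x ^ w (b : A)) (fun b _ _ => pow_nonneg hx _)
    rw [Finset.sum_pair hne] at this
    simpa [hone] using this
  have hub : ∀ x ∈ {x : ℝ | 0 ≤ x ∧ ∑' b : S, x ^ w (b : A) ≤ 1}, x ≤ 1 - (1 / 2) ^ w a := by
    rintro x ⟨hx, h⟩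
    have h3 := hsub x hx h
    have hp : ((1 : ℝ) / 2) ^ w a ≤ 1 / 2 := by
      have := pow_le_pow_of_le_one (a := (1 : ℝ) / 2) (by norm_num) (by norm_num)
        (Nat.succ_le_of_lt (hw a))
      simpa using this
    rcases le_total x (1 / 2) with h4 | h4
    · linarith
    · have := pow_le_pow_left₀ (by norm_num) h4 (w a)
      linarith
  have hlt : rhoOf w S < 1 := by
    have hpos : (0 : ℝ) < (1 / 2) ^ w a := by positivity
    have hle : rhoOf w S ≤ 1 - (1 / 2) ^ w a := by
      refine csSup_le ⟨0, le_rfl, ?_⟩ hub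
      rw [tsum_fintype]
      rw [Finset.sum_eq_zero]
      · norm_num
      · intro b _; exact zero_pow (hw _).ne'
    linarith
  have hpos : 0 < rhoOf w S := by
    have hcard : (1 : ℝ) ≤ Fintype.card S := by
      have hc : 0 < Fintype.card S := Fintype.card_pos_iff.2 ⟨⟨one, h1⟩⟩
      exact_mod_cast hc
    have hx0 : (0 : ℝ) < (Fintype.card S : ℝ)⁻¹ := by positivity
    refine lt_of_lt_of_le hx0 (le_csSup ⟨1 - (1 / 2) ^ w a, fun x hx => hub x hx⟩ ?_)
    refine ⟨hx0.le, ?_⟩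
    rw [tsum_fintype]
    calc ∑ b : S, ((Fintype.card S : ℝ)⁻¹) ^ w (b : A)
        ≤ ∑ _b : S, (Fintype.card S : ℝ)⁻¹ := by
          refine Finset.sum_le_sum fun b _ => ?_
          have := pow_le_pow_of_le_one hx0.le (inv_le_one_of_one_le₀ hcard)
            (Nat.succ_le_of_lt (hw (b : A)))
          simpa using this
      _ = 1 := by
          rw [Finset.sum_const, Finset.card_univ, nsmul_eq_mul]
          exact mul_inv_cancel₀ (by positivity)
  exact (one_lt_inv₀ hpos).2 hlt

theorem loop_of_gamma [Fintype A] (hw : ∀ a, 0 < w a) {one : A} (hone : w one = 1)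
    (hone_le : ∀ a : A, E.le [one] [a]) (hpoly : E.gammaC φ = 1) :
    ∀ X ∈ E.Cset φ, ∀ a, E.pstate φ (X ++ [a]) = E.pstate φ X → a = one := by
  intro X hX a h
  by_contra ha
  have h1 : one ∈ E.stateLoopP φ (E.pstate φ X) := by
    rw [E.mem_stateLoopP]
    apply _root_.le_antisymm
    · conv_rhs => rw [← h]
      exact E.pstate_mono φ (E.le_append (E.le_refl _) (hone_le a))
    · exact E.pstate_mono φ (E.le_append_right _ _)
  have h2 := growthOf_gt hw hone ha h1 ((E.mem_stateLoopP φ X a).2 h)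
  have hb : BddAbove {g : ℝ | ∃ X ∈ E.Cset φ,
      g = growthOf w (E.stateLoopP φ (E.pstate φ X))} := by
    apply Set.Finite.bddAbove
    apply (Set.finite_range (fun S : Set A => growthOf w S)).subset
    rintro _ ⟨X, -, rfl⟩
    exact ⟨_, rfl⟩
  have h3 := le_csSup hb ⟨X, hX, rfl⟩
  have h4 : sSup {g : ℝ | ∃ X ∈ E.Cset φ,
      g = growthOf w (E.stateLoopP φ (E.pstate φ X))} = 1 := hpoly
  rw [h4] at h3
  linarith

/-- The reversed embedding order. -/
def rev : EmbeddingOrder A w where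
  le U V := E.le U.reverse V.reverse
  le_refl _ := E.le_refl _
  le_trans := E.le_trans
  le_antisymm h1 h2 := List.reverse_injective (E.le_antisymm h1 h2)
  nil_le W := E.nil_le _
  weight_lt := by
    intro W V h hne
    have := E.weight_lt h (fun h => hne (List.reverse_injective h))
    simpa [List.sum_reverse] using this
  le_iff_factor W V := by
    rw [E.le_iff_forall₂]
    constructor
    · rintro ⟨Ws, h1, h2⟩
      have h3 : List.Forall₂ (fun U a => E.le U.reverse [a]) (Ws.map List.reverse).reverse V := by
        rw [← List.reverse_reverse V, List.forall₂_reverse_iff, List.forall₂_map_left_iff]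
        simpa using h1
      obtain ⟨h4, h5⟩ := List.forall₂_iff_zip.1 h3
      refine ⟨(Ws.map List.reverse).reverse, h4, ?_, fun q hq => by simpa using h5 hq⟩
      rw [← List.reverse_flatten, h2, List.reverse_reverse]
    · rintro ⟨Ws, h1, h2, h3⟩
      have h4 : List.Forall₂ (fun U a => E.le U.reverse [a]) Ws V :=
        List.forall₂_iff_zip.2 ⟨h1, fun {a b} h => by simpa using h3 (a, b) h⟩
      refine ⟨(Ws.map List.reverse).reverse, ?_, ?_⟩
      · rw [List.forall₂_reverse_iff, List.forall₂_map_left_iff]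
        exact h4
      · rw [← List.reverse_flatten, h2]

theorem rev_le (U V : List A) : E.rev.le U V ↔ E.le U.reverse V.reverse := Iff.rfl

/-- The reversed forbidden words. -/
def rφ : Fin f → List A := fun i => (φ i).reverse

theorem mem_Cset_rev (W : List A) : W ∈ E.rev.Cset (rφ φ) ↔ W.reverse ∈ E.Cset φ := by
  simp [Cset, rev_le, rφ]

theorem sstate_eq (W : List A) : E.sstate φ W = E.rev.pstate (rφ φ) W.reverse := by
  funext i
  simp [sstate, pstate, rev_le, rφ, List.take_reverse]

theorem stateLoopS_eq (s : Fin f → ℕ) : E.stateLoopS φ s = E.rev.stateLoopP (rφ φ) s := by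
  ext a
  constructor
  · intro h X hX
    have := h X.reverse (by rw [sstate_eq, List.reverse_reverse, hX])
    rwa [sstate_eq, List.reverse_cons, List.reverse_reverse] at this
  · intro h Y hY
    rw [sstate_eq] at hY ⊢
    rw [List.reverse_cons]
    exact h _ hY

theorem blockLenS_eq (W : List A) (q : Fin f → ℕ) :
    E.blockLenS φ W q = E.rev.blockLenP (rφ φ) W.reverse q := by
  unfold blockLenS blockLenP
  refine Set.ncard_congr (fun i _ => W.length - 1 - i) ?_ ?_ ?_
  · rintro i ⟨h1, h2, h3⟩
    rw [sstate_eq, List.reverse_drop] at h2 h3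
    refine ⟨by simp; omega, ?_, ?_⟩
    · rw [← h2]; congr 2; omega
    · rw [← h3]; congr 2; omega
  · rintro i j ⟨h1, -⟩ ⟨h2, -⟩ h
    omega
  · rintro j ⟨h1, h2, h3⟩
    rw [List.length_reverse] at h1
    refine ⟨W.length - 1 - j, ⟨by omega, ?_, ?_⟩, by omega⟩
    · rw [sstate_eq, List.reverse_drop, ← h2]; congr 2; omega
    · rw [sstate_eq, List.reverse_drop, ← h3]; congr 2; omega

theorem wt_reverse (W : List A) : wt w W.reverse = wt w W := by
  simp [wt, List.sum_reverse]

theorem loop_rev {one : A}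
    (hloop : ∀ X ∈ E.Cset φ, ∀ a, E.pstate φ (X ++ [a]) = E.pstate φ X → a = one) :
    ∀ X ∈ E.rev.Cset (rφ φ), ∀ a,
      E.rev.pstate (rφ φ) (X ++ [a]) = E.rev.pstate (rφ φ) X → a = one := by
  intro X hX a h
  by_contra ha
  obtain ⟨N, hN⟩ := E.pcount φ hloop
  have hst : ∀ m : ℕ, E.rev.pstate (rφ φ) (X ++ List.replicate m a) =
      E.rev.pstate (rφ φ) X := by
    intro m
    induction m with
    | zero => simp
    | succ m ih =>
      rw [List.replicate_succ', ← List.append_assoc, E.rev.pstate_congr (rφ φ) ih a, h]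
  have hmem : X ++ List.replicate (N + 1) a ∈ E.rev.Cset (rφ φ) := by
    rw [mem_Cset_iff, hst]
    exact (E.rev.mem_Cset_iff (rφ φ) X).1 hX
  have := hN _ ((E.mem_Cset_rev φ _).1 hmem) a ha
  rw [List.count_reverse, List.count_append, List.count_replicate_self] at this
  omega

theorem sbound [Fintype A] (hw : ∀ a, 0 < w a) {one : A} (hone : w one = 1)
    (hone_le : ∀ a : A, E.le [one] [a])
    (hloop : ∀ X ∈ E.Cset φ, ∀ a, E.pstate φ (X ++ [a]) = E.pstate φ X → a = one) (M : ℕ) :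
    ∃ c : ℕ, ∀ n : ℕ,
      Set.ncard {W : List A | W ∈ E.Cset φ ∧ wt w W = n ∧
        ∃ q, (∃ j ≤ W.length, E.sstate φ (W.drop j) = q) ∧ (E.stateLoopS φ q).Nonempty ∧
          E.blockLenS φ W q ≤ M} * n ≤
      c * Set.ncard {W : List A | W ∈ E.Cset φ ∧ wt w W = n} := by
  obtain ⟨c, hc⟩ := E.rev.pbound (rφ φ) hw hone (fun a => by simpa [rev_le] using hone_le a)
    (E.loop_rev φ hloop) M
  refine ⟨c, fun n => ?_⟩
  have hC : Set.ncard {W : List A | W ∈ E.rev.Cset (rφ φ) ∧ wt w W = n} =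
      Set.ncard {W : List A | W ∈ E.Cset φ ∧ wt w W = n} := by
    rw [← Set.ncard_image_of_injective {W : List A | W ∈ E.Cset φ ∧ wt w W = n}
      List.reverse_injective]
    congr 1
    ext W
    constructor
    · rintro ⟨h1, h2⟩
      exact ⟨W.reverse, ⟨(E.mem_Cset_rev φ W).1 h1, by rw [wt_reverse]; exact h2⟩, by simp⟩
    · rintro ⟨V, ⟨h1, h2⟩, rfl⟩
      exact ⟨by rw [mem_Cset_rev, List.reverse_reverse]; exact h1, by rw [wt_reverse]; exact h2⟩
  rw [← hC]
  refine _root_.le_trans (Nat.mul_le_mul_right n ?_) (hc n)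
  rw [← Set.ncard_image_of_injective _ List.reverse_injective]
  refine Set.ncard_le_ncard ?_ ((BlockAux.finite_wt hw n).subset (fun W h => h.2.1))
  rintro _ ⟨W, ⟨h1, h2, q, ⟨j, hj, h3⟩, h4, h5⟩, rfl⟩
  refine ⟨by rw [mem_Cset_rev, List.reverse_reverse]; exact h1, by rw [wt_reverse]; exact h2,
    q, ⟨W.length - j, by simp, ?_⟩, by rwa [← stateLoopS_eq], by rwa [← blockLenS_eq]⟩
  rw [sstate_eq, List.reverse_drop] at h3
  exact h3

end Concrete

end EmbeddingOrder

/-- **Lemma `lem-bigblocks`.**  Let `C` be an unbounded polynomial class (dominant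
growth rate `γ = 1`, unbounded growth function).  With probability `1 − O(1/n)`, in a
uniformly random word `W ∈ C_n`, all the dominant loop blocks in the prefix and the
suffix decompositions of `W` are large (length at least `2KQ + 1`).  (Stated by
counting: the number of weight-`n` words of `C` failing this is at most `c·|C_n|/n`.) -/
theorem dominant_blocks_large {A : Type*} [Fintype A] {w : A → ℕ}
    (E : EmbeddingOrder A w) {f : ℕ} (φ : Fin f → List A)
    (hw : ∀ a, 0 < w a)
    (one : A) (hone : w one = 1) (hone_le : ∀ a : A, E.le [one] [a])
    (hf : 0 < f) (hφne : ∀ i, φ i ≠ [])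
    (hφmin : ∀ i ψ, E.le ψ (φ i) → ψ ≠ φ i → ψ ∈ E.Cset φ)
    (hunb : ¬ ∃ M : ℕ, ∀ n : ℕ,
      Set.ncard {W : List A | W ∈ E.Cset φ ∧ EmbeddingOrder.wt w W = n} ≤ M)
    (hpoly : E.gammaC φ = 1) :
    ∃ c : ℝ, 0 < c ∧ ∀ n : ℕ,
      (Set.ncard {W : List A | W ∈ E.Cset φ ∧ wt w W = n ∧
          ¬ (E.AllDomLargeP φ (Kmax A w) (E.Qconst φ) W ∧
              E.AllDomLargeS φ (Kmax A w) (E.Qconst φ) W)} : ℝ) * n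
        ≤ c * (Set.ncard {W : List A | W ∈ E.Cset φ ∧ wt w W = n} : ℝ) := by
  have hloop := E.loop_of_gamma φ hw hone hone_le hpoly
  obtain ⟨c1, h1⟩ := E.pbound φ hw hone hone_le hloop (2 * Kmax A w * E.Qconst φ)
  obtain ⟨c2, h2⟩ := E.sbound φ hw hone hone_le hloop (2 * Kmax A w * E.Qconst φ)
  refine ⟨(c1 : ℝ) + c2 + 1, by positivity, fun n => ?_⟩
  have hne : ∀ S : Set A, growthOf w S = E.gammaC φ → S.Nonempty := by
    intro S hS
    rw [hpoly] at hS
    rw [Set.nonempty_iff_ne_empty]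
    rintro rfl
    rw [growthOf_empty] at hS
    exact zero_ne_one hS
  have hfin : ∀ p : List A → Prop,
      {W : List A | W ∈ E.Cset φ ∧ wt w W = n ∧ p W}.Finite := fun p =>
    (BlockAux.finite_wt hw n).subset (fun W h => h.2.1)
  have hsub : Set.ncard {W : List A | W ∈ E.Cset φ ∧ wt w W = n ∧
          ¬ (E.AllDomLargeP φ (Kmax A w) (E.Qconst φ) W ∧
              E.AllDomLargeS φ (Kmax A w) (E.Qconst φ) W)} ≤ _ :=
    Set.ncard_le_ncard (t := {W : List A | W ∈ E.Cset φ ∧ wt w W = n ∧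
        ∃ q, (∃ j ≤ W.length, E.pstate φ (W.take j) = q) ∧ (E.stateLoopP φ q).Nonempty ∧
          E.blockLenP φ W q ≤ 2 * Kmax A w * E.Qconst φ} ∪
      {W : List A | W ∈ E.Cset φ ∧ wt w W = n ∧
        ∃ q, (∃ j ≤ W.length, E.sstate φ (W.drop j) = q) ∧ (E.stateLoopS φ q).Nonempty ∧
          E.blockLenS φ W q ≤ 2 * Kmax A w * E.Qconst φ}) (by
      rintro W ⟨hW, hn, hbad⟩
      rw [not_and_or] at hbad
      rcases hbad with hbad | hbad
      · left
        unfold AllDomLargeP at hbad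
        push Not at hbad
        obtain ⟨q, hq, hg, hb⟩ := hbad
        exact ⟨hW, hn, q, hq, hne _ hg, Nat.lt_succ_iff.1 hb⟩
      · right
        unfold AllDomLargeS at hbad
        push Not at hbad
        obtain ⟨q, hq, hg, hb⟩ := hbad
        exact ⟨hW, hn, q, hq, hne _ hg, Nat.lt_succ_iff.1 hb⟩)
      ((hfin _).union (hfin _))
  have h3 := Nat.mul_le_mul_right n (hsub.trans (Set.ncard_union_le _ _))
  rw [add_mul] at h3
  have h4 := h3.trans (add_le_add (h1 n) (h2 n))
  have h5 := (Nat.cast_le (α := ℝ)).2 h4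
  push_cast at h5
  have h6 : (0 : ℝ) ≤ (Set.ncard {W : List A | W ∈ E.Cset φ ∧ wt w W = n} : ℝ) :=
    Nat.cast_nonneg _
  linarith
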